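/- For p > 1 there exist constants 0 < c ≤ C < ∞ (depending only on p) such that for all real a, b: c·(b-a)^2·(max(|a|,|b|))^{p-2} ≤ F(a,b) ≤ C·(b-a)^2·(max(|a|,|b|))^{p-2}. -/

import Mathlib

noncomputable def F (p a b : ℝ) : ℝ :=
  |b| ^ p - |a| ^ p - p * a * |a| ^ (p - 2) * (b - a)

/-!
`F p` is the Bregman divergence of the strictly convex function `|x| ^ p`, and both it and
`(b - a) ^ 2 * max |a| |b| ^ (p - 2)` are positively homogeneous of degree `p` in `(a, b)`. Hence it
suffices to compare them on the unit sphere of the sup norm, where the second one is `(b - a) ^ 2`.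
By compactness the comparison there is a local matter. Off the diagonal both functions are positive
and continuous; at a diagonal point `(x, x)` of the sphere we have `x ≠ 0`, so `|x| ^ p` is twice
continuously differentiable near `x`, and the divergence is asymptotic to
`p * (p - 1) / 2 * |x| ^ (p - 2) * (b - a) ^ 2`.
-/

open Asymptotics Filter Metric Set Topology

section Asymptotics

variable {α X V W : Type*}

theorem isBigO_principal_of_isCompact [TopologicalSpace X] [Norm V] [SeminormedAddCommGroup W]
    {K : Set X} (hK : IsCompact K) {u : X → V} {v : X → W}
    (h : ∀ x ∈ K, u =O[𝓝[K] x] v) : u =O[𝓟 K] v := by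
  refine hK.induction_on (p := fun s => u =O[𝓟 s] v) ?_ (fun s t hst ht => ?_)
    (fun s t hs ht => ?_) fun x hx => ?_
  · simp only [principal_empty, isBigO_bot]
  · exact ht.mono (principal_mono.2 hst)
  · simpa only [← sup_principal] using hs.sup ht
  · obtain ⟨c, hc⟩ := (h x hx).bound
    exact ⟨_, hc, isBigO_principal.2 ⟨c, fun _ hy => hy⟩⟩

theorem isTheta_principal_of_isCompact [TopologicalSpace X] [SeminormedAddCommGroup V]
    [SeminormedAddCommGroup W] {K : Set X} (hK : IsCompact K) {u : X → V} {v : X → W}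
    (h : ∀ x ∈ K, u =Θ[𝓝[K] x] v) : u =Θ[𝓟 K] v :=
  ⟨isBigO_principal_of_isCompact hK fun x hx => (h x hx).isBigO,
    isBigO_principal_of_isCompact hK fun x hx => (h x hx).symm.isBigO⟩

theorem exists_mul_le_and_le_mul_of_isTheta_top {u v : α → ℝ} (hu : 0 ≤ u) (hv : 0 ≤ v)
    (h : u =Θ[⊤] v) :
    ∃ c C : ℝ, 0 < c ∧ c ≤ C ∧ ∀ x, c * v x ≤ u x ∧ u x ≤ C * v x := by
  obtain ⟨C, hC⟩ := isBigO_top.1 h.isBigO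
  obtain ⟨c, hc, hcu⟩ := h.symm.isBigO.exists_pos
  rw [isBigOWith_top] at hcu
  refine ⟨c⁻¹, max c⁻¹ C, inv_pos.2 hc, le_max_left _ _, fun x => ⟨?_, ?_⟩⟩
  · rw [inv_mul_le_iff₀ hc]
    simpa only [Real.norm_of_nonneg (hu x), Real.norm_of_nonneg (hv x)] using hcu x
  · have hux : u x ≤ C * v x := by
      simpa only [Real.norm_of_nonneg (hu x), Real.norm_of_nonneg (hv x)] using hC x
    exact hux.trans (mul_le_mul_of_nonneg_right (le_max_right _ _) (hv x))

end Asymptotics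

section PosHomogeneous

variable {E V W : Type*} [NormedAddCommGroup E] [NormedSpace ℝ E] [SeminormedAddCommGroup V]
  [NormedSpace ℝ V] [SeminormedAddCommGroup W] [NormedSpace ℝ W]

/-- Positive homogeneity of degree `p`, which reduces the comparison of two functions to the unit
sphere. The scalar `0` is excluded, so the value at `0` is unconstrained when `p = 0`. -/
def IsPosHomogeneous {X Y : Type*} [SMul ℝ X] [SMul ℝ Y] (p : ℝ) (u : X → Y) : Prop :=
  ∀ ⦃s : ℝ⦄, 0 < s → ∀ x, u (s • x) = s ^ p • u x

theorem isBigO_top_of_isBigO_sphere {p : ℝ} {u : E → V} {v : E → W} (hu : IsPosHomogeneous p u)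
    (hv : IsPosHomogeneous p v) (hu₀ : u 0 = 0) (h : u =O[𝓟 (sphere 0 1)] v) : u =O[⊤] v := by
  obtain ⟨C, hC⟩ := isBigO_principal.1 h
  refine isBigO_top.2 ⟨max C 0, fun x => ?_⟩
  rcases eq_or_ne x 0 with rfl | hx
  · rw [hu₀, norm_zero]
    positivity
  · have hr : 0 < ‖x‖ := norm_pos_iff.2 hx
    have hmem : ‖x‖⁻¹ • x ∈ sphere (0 : E) 1 := by
      rw [mem_sphere_zero_iff_norm, norm_smul, norm_inv, norm_norm, inv_mul_cancel₀ hr.ne']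
    calc ‖u x‖ = ‖x‖ ^ p * ‖u (‖x‖⁻¹ • x)‖ := by
          rw [← norm_smul_of_nonneg (by positivity), ← hu hr, smul_inv_smul₀ hr.ne']
      _ ≤ ‖x‖ ^ p * (max C 0 * ‖v (‖x‖⁻¹ • x)‖) := by
          gcongr
          exact (hC _ hmem).trans (by gcongr; exact le_max_left _ _)
      _ = max C 0 * ‖v x‖ := by
          rw [mul_left_comm, ← norm_smul_of_nonneg (by positivity), ← hv hr,
            smul_inv_smul₀ hr.ne']

theorem isTheta_top_of_isTheta_sphere {p : ℝ} {u : E → V} {v : E → W} (hu : IsPosHomogeneous p u)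
    (hv : IsPosHomogeneous p v) (hu₀ : u 0 = 0) (hv₀ : v 0 = 0)
    (h : u =Θ[𝓟 (sphere 0 1)] v) : u =Θ[⊤] v :=
  ⟨isBigO_top_of_isBigO_sphere hu hv hu₀ h.isBigO,
    isBigO_top_of_isBigO_sphere hv hu hv₀ h.symm.isBigO⟩

theorem isPosHomogeneous_norm_rpow (p : ℝ) : IsPosHomogeneous p fun x : E => ‖x‖ ^ p := by
  intro s hs x
  simp only [norm_smul_of_nonneg hs.le, Real.mul_rpow hs.le (norm_nonneg x), smul_eq_mul]

theorem isPosHomogeneous_sub_sq_mul_norm_rpow (p : ℝ) :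
    IsPosHomogeneous p fun z : ℝ × ℝ => (z.2 - z.1) ^ 2 * ‖z‖ ^ (p - 2) := by
  intro s hs z
  have hsp : s ^ p = s ^ 2 * s ^ (p - 2) := by
    rw [← Real.rpow_natCast, ← Real.rpow_add hs]
    norm_num
  simp only [isPosHomogeneous_norm_rpow (p - 2) hs z, hsp, Prod.smul_fst, Prod.smul_snd,
    smul_eq_mul]
  ring

end PosHomogeneous

section Bregman

variable {f : ℝ → ℝ}

/-- The Bregman divergence of `f`: the error at `b` of the tangent line to `f` at `a`. -/
noncomputable def bregmanDiv (f : ℝ → ℝ) (a b : ℝ) : ℝ :=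
  f b - f a - deriv f a * (b - a)

theorem bregmanDiv_self (f : ℝ → ℝ) (a : ℝ) : bregmanDiv f a a = 0 := by
  simp [bregmanDiv]

theorem continuous_bregmanDiv (hf : ContDiff ℝ 1 f) :
    Continuous fun z : ℝ × ℝ => bregmanDiv f z.1 z.2 := by
  have := hf.continuous_deriv le_rfl
  unfold bregmanDiv
  fun_prop

theorem bregmanDiv_nonneg {S : Set ℝ} {a b : ℝ} (hf : ConvexOn ℝ S f) (ha : a ∈ S) (hb : b ∈ S)
    (hfa : DifferentiableAt ℝ f a) : 0 ≤ bregmanDiv f a b := by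
  rcases lt_trichotomy a b with h | rfl | h
  · rw [bregmanDiv, sub_nonneg, ← le_div_iff₀ (sub_pos.2 h), ← slope_def_field]
    exact hf.deriv_le_slope ha hb h hfa
  · exact (bregmanDiv_self f a).ge
  · rw [bregmanDiv, sub_nonneg, ← div_le_iff_of_neg (sub_neg.2 h), ← slope_def_field, slope_comm]
    exact hf.slope_le_deriv hb ha h hfa

theorem bregmanDiv_pos {S : Set ℝ} {a b : ℝ} (hf : StrictConvexOn ℝ S f) (ha : a ∈ S) (hb : b ∈ S)
    (hfa : DifferentiableAt ℝ f a) (hab : a ≠ b) : 0 < bregmanDiv f a b := by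
  rw [bregmanDiv, sub_pos]
  rcases hab.lt_or_gt with h | h
  · rw [← lt_div_iff₀ (sub_pos.2 h), ← slope_def_field]
    exact hf.deriv_lt_slope ha hb h hfa
  · rw [← div_lt_iff_of_neg (sub_neg.2 h), ← slope_def_field, slope_comm]
    exact hf.slope_lt_deriv hb ha h hfa

theorem isPosHomogeneous_bregmanDiv {p : ℝ} (hf : IsPosHomogeneous p f) :
    IsPosHomogeneous p fun z : ℝ × ℝ => bregmanDiv f z.1 z.2 := by
  intro s hs z
  have hf' : s * deriv f (s * z.1) = s ^ p * deriv f z.1 := by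
    have hfun : (fun x => f (s * x)) = fun x => s ^ p * f x := funext (hf hs)
    rw [← smul_eq_mul, ← deriv_comp_mul_left, hfun, deriv_const_mul_field]
  have h₁ := hf hs z.1
  have h₂ := hf hs z.2
  simp only [smul_eq_mul] at h₁ h₂
  simp only [bregmanDiv, Prod.smul_fst, Prod.smul_snd, smul_eq_mul, h₁, h₂]
  linear_combination (z.1 - z.2) * hf'

theorem norm_bregmanDiv_sub_sq_le {a b L M : ℝ} (hf : ∀ t ∈ uIcc a b, DifferentiableAt ℝ f t)
    (hbound : ∀ t ∈ uIcc a b, ‖deriv f t - deriv f a - L * (t - a)‖ ≤ M) :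
    ‖bregmanDiv f a b - L / 2 * (b - a) ^ 2‖ ≤ M * ‖b - a‖ := by
  have hderiv : ∀ t ∈ uIcc a b,
      HasDerivWithinAt (fun t => f t - deriv f a * t - L / 2 * (t - a) ^ 2)
        (deriv f t - deriv f a - L * (t - a)) (uIcc a b) t := fun t ht => by
    have hlin := (hasDerivAt_id t).const_mul (deriv f a)
    have hsq := (((hasDerivAt_id t).sub_const a).pow 2).const_mul (L / 2)
    refine ((((hf t ht).hasDerivAt.sub hlin).sub hsq).congr_deriv ?_).hasDerivWithinAt
    simp only [id]
    ring
  calc ‖bregmanDiv f a b - L / 2 * (b - a) ^ 2‖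
      = ‖(f b - deriv f a * b - L / 2 * (b - a) ^ 2) -
          (f a - deriv f a * a - L / 2 * (a - a) ^ 2)‖ := by
        rw [bregmanDiv]
        ring_nf
    _ ≤ M * ‖b - a‖ :=
        (convex_uIcc a b).norm_image_sub_le_of_norm_hasDerivWithin_le hderiv hbound
          left_mem_uIcc right_mem_uIcc

/-- Strict differentiability of `f'`, rather than mere differentiability, is what makes this
second-order expansion uniform in the base point `z.1`. -/
theorem isLittleO_bregmanDiv_sub_sq {x L : ℝ} (hf : ∀ᶠ y in 𝓝 x, DifferentiableAt ℝ f y)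
    (hf' : HasStrictDerivAt (deriv f) L x) :
    (fun z : ℝ × ℝ => bregmanDiv f z.1 z.2 - L / 2 * (z.2 - z.1) ^ 2) =o[𝓝 (x, x)]
      fun z => (z.2 - z.1) ^ 2 := by
  refine isLittleO_iff.2 fun ε hε => ?_
  have hsmall : ∀ᶠ z : ℝ × ℝ in 𝓝 (x, x), DifferentiableAt ℝ f z.1 ∧
      ‖deriv f z.1 - deriv f z.2 - L * (z.1 - z.2)‖ ≤ ε * ‖z.1 - z.2‖ := by
    refine ((continuous_fst.tendsto (x, x)).eventually hf).and ?_
    simpa [mul_comm] using isLittleO_iff.1 hf'.hasStrictFDerivAt.isLittleO hε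
  obtain ⟨δ, hδ, hball⟩ := eventually_nhds_iff_ball.1 hsmall
  filter_upwards [ball_mem_nhds (x, x) hδ] with ⟨a, b⟩ hab
  rw [← ball_prod_same] at hab hball
  have hseg : ∀ t ∈ uIcc a b, (t, a) ∈ ball x δ ×ˢ ball x δ := fun t ht =>
    ⟨(convex_ball x δ).ordConnected.uIcc_subset hab.1 hab.2 ht, hab.1⟩
  have hbound : ∀ t ∈ uIcc a b, ‖deriv f t - deriv f a - L * (t - a)‖ ≤ ε * ‖b - a‖ :=
    fun t ht => (hball _ (hseg t ht)).2.trans <|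
      mul_le_mul_of_nonneg_left (abs_sub_left_of_mem_uIcc ht) hε.le
  calc ‖bregmanDiv f a b - L / 2 * (b - a) ^ 2‖ ≤ ε * ‖b - a‖ * ‖b - a‖ :=
        norm_bregmanDiv_sub_sq_le (fun t ht => (hball _ (hseg t ht)).1) hbound
    _ = ε * ‖(b - a) ^ 2‖ := by rw [norm_pow, sq, mul_assoc]

theorem isTheta_bregmanDiv_nhds_diagonal {x L : ℝ} (hf : ∀ᶠ y in 𝓝 x, DifferentiableAt ℝ f y)
    (hf' : HasStrictDerivAt (deriv f) L x) (hL : L ≠ 0) :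
    (fun z : ℝ × ℝ => bregmanDiv f z.1 z.2) =Θ[𝓝 (x, x)] fun z => (z.2 - z.1) ^ 2 := by
  have hL₂ : L / 2 ≠ 0 := div_ne_zero hL two_ne_zero
  have hequiv : (fun z : ℝ × ℝ => bregmanDiv f z.1 z.2) ~[𝓝 (x, x)]
      fun z => L / 2 * (z.2 - z.1) ^ 2 :=
    (isLittleO_const_mul_right_iff hL₂).2 (isLittleO_bregmanDiv_sub_sq hf hf')
  exact (isTheta_const_mul_right hL₂).1 hequiv.isTheta

theorem isTheta_bregmanDiv_of_isCompact (hf : ContDiff ℝ 1 f) (hconv : StrictConvexOn ℝ univ f)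
    {K : Set (ℝ × ℝ)} (hK : IsCompact K)
    (hf' : ∀ x, (x, x) ∈ K → ∃ L ≠ 0, HasStrictDerivAt (deriv f) L x) :
    (fun z : ℝ × ℝ => bregmanDiv f z.1 z.2) =Θ[𝓟 K] fun z => (z.2 - z.1) ^ 2 := by
  have hfd : Differentiable ℝ f := hf.differentiable one_ne_zero
  refine isTheta_principal_of_isCompact hK fun ⟨a, b⟩ hab => IsTheta.mono ?_ nhdsWithin_le_nhds
  rcases eq_or_ne a b with rfl | hne
  · obtain ⟨L, hL, hfL⟩ := hf' a hab
    exact isTheta_bregmanDiv_nhds_diagonal (Eventually.of_forall hfd) hfL hL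
  · have hdiv : bregmanDiv f a b ≠ 0 :=
      (bregmanDiv_pos hconv (mem_univ a) (mem_univ b) (hfd a) hne).ne'
    have hsq : (b - a) ^ 2 ≠ 0 := pow_ne_zero 2 (sub_ne_zero.2 hne.symm)
    have hc : Continuous fun z : ℝ × ℝ => (z.2 - z.1) ^ 2 := by fun_prop
    exact isTheta_of_div_tendsto_nhds_ne_zero
      ((hc.tendsto (a, b)).div ((continuous_bregmanDiv hf).tendsto (a, b)) hdiv)
      (div_ne_zero hsq hdiv)

theorem isTheta_bregmanDiv_of_isPosHomogeneous {p : ℝ} (hf : ContDiff ℝ 1 f)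
    (hconv : StrictConvexOn ℝ univ f) (hhom : IsPosHomogeneous p f)
    (hf' : ∀ x ≠ 0, ∃ L ≠ 0, HasStrictDerivAt (deriv f) L x) :
    (fun z : ℝ × ℝ => bregmanDiv f z.1 z.2) =Θ[⊤] fun z => (z.2 - z.1) ^ 2 * ‖z‖ ^ (p - 2) := by
  refine isTheta_top_of_isTheta_sphere (isPosHomogeneous_bregmanDiv hhom)
    (isPosHomogeneous_sub_sq_mul_norm_rpow p) (bregmanDiv_self f 0) (by simp) ?_
  have hsphere := isTheta_bregmanDiv_of_isCompact hf hconv (isCompact_sphere (0 : ℝ × ℝ) 1)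
    fun x hx => hf' x <| by rintro rfl; simp at hx
  refine hsphere.trans_eventuallyEq (eventually_principal.2 fun z hz => ?_)
  simp only [mem_sphere_zero_iff_norm.1 hz, Real.one_rpow, mul_one]

end Bregman

section Power

variable {p : ℝ}

theorem strictConvexOn_norm_rpow {E : Type*} [NormedAddCommGroup E] [NormedSpace ℝ E]
    [StrictConvexSpace ℝ E] (hp : 1 < p) : StrictConvexOn ℝ univ fun x : E => ‖x‖ ^ p := by
  refine ⟨convex_univ, fun x _ y _ hxy a b ha hb hab => ?_⟩
  have : 0 < p := zero_lt_one.trans hp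
  rcases eq_or_ne ‖x‖ ‖y‖ with h | h
  · calc ‖a • x + b • y‖ ^ p < ‖y‖ ^ p := by
          gcongr
          exact norm_combo_lt_of_ne h.le le_rfl hxy ha hb hab
      _ = a • ‖x‖ ^ p + b • ‖y‖ ^ p := by rw [h, ← add_smul, hab, one_smul]
  · calc ‖a • x + b • y‖ ^ p ≤ (a • ‖x‖ + b • ‖y‖) ^ p := by
          gcongr
          exact convexOn_univ_norm.2 (mem_univ x) (mem_univ y) ha.le hb.le hab
      _ < a • ‖x‖ ^ p + b • ‖y‖ ^ p :=
          (strictConvexOn_rpow hp).2 (norm_nonneg x) (norm_nonneg y) h ha hb hab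

theorem deriv_abs_rpow (hp : 1 < p) :
    deriv (fun x : ℝ => |x| ^ p) = fun x => p * |x| ^ (p - 2) * x :=
  funext fun x => (hasDerivAt_abs_rpow x hp).deriv

theorem hasStrictDerivAt_deriv_abs_rpow {x : ℝ} (hp : 1 < p) (hx : x ≠ 0) :
    HasStrictDerivAt (deriv fun y : ℝ => |y| ^ p) (p * (p - 1) * |x| ^ (p - 2)) x := by
  have hpow : HasStrictDerivAt (fun y : ℝ => |y| ^ (p - 2))
      ((p - 2) * |x| ^ (p - 2 - 1) * (SignType.sign x : ℝ)) x :=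
    (Real.hasStrictDerivAt_rpow_const_of_ne (abs_ne_zero.2 hx) (p - 2)).comp x
      (hasStrictDerivAt_abs hx)
  rw [deriv_abs_rpow hp]
  refine ((hpow.const_mul p).mul (hasStrictDerivAt_id x)).congr_deriv ?_
  have hsign : (SignType.sign x : ℝ) * x = |x| := sign_mul_self x
  have hmul : |x| ^ (p - 2 - 1) * |x| = |x| ^ (p - 2) := by
    rw [← Real.rpow_add_one (abs_ne_zero.2 hx), sub_add_cancel]
  simp only [id]
  linear_combination p * (p - 2) * |x| ^ (p - 2 - 1) * hsign + p * (p - 2) * hmul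

theorem F_eq_bregmanDiv (hp : 1 < p) (a b : ℝ) : F p a b = bregmanDiv (fun x => |x| ^ p) a b := by
  simp only [F, bregmanDiv, deriv_abs_rpow hp]
  ring

theorem F_nonneg (hp : 1 < p) (a b : ℝ) : 0 ≤ F p a b := by
  rw [F_eq_bregmanDiv hp]
  exact bregmanDiv_nonneg (strictConvexOn_norm_rpow hp).convexOn (mem_univ a) (mem_univ b)
    (differentiable_norm_rpow hp a)

theorem isTheta_F (hp : 1 < p) :
    (fun z : ℝ × ℝ => F p z.1 z.2) =Θ[⊤] fun z => (z.2 - z.1) ^ 2 * ‖z‖ ^ (p - 2) := by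
  have hne : ∀ x : ℝ, x ≠ 0 → p * (p - 1) * |x| ^ (p - 2) ≠ 0 := fun x hx =>
    mul_ne_zero (mul_ne_zero (by linarith) (sub_ne_zero.2 hp.ne'))
      (Real.rpow_pos_of_pos (abs_pos.2 hx) _).ne'
  simp only [F_eq_bregmanDiv hp]
  exact isTheta_bregmanDiv_of_isPosHomogeneous (contDiff_norm_rpow hp)
    (strictConvexOn_norm_rpow hp) (isPosHomogeneous_norm_rpow p)
    fun x hx => ⟨_, hne x hx, hasStrictDerivAt_deriv_abs_rpow hp hx⟩

end Power

theorem F_comparable (p : ℝ) (hp : 1 < p) :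
    ∃ c C : ℝ, 0 < c ∧ c ≤ C ∧ ∀ a b : ℝ,
      c * (b - a) ^ 2 * (max |a| |b|) ^ (p - 2) ≤ F p a b ∧
      F p a b ≤ C * (b - a) ^ 2 * (max |a| |b|) ^ (p - 2) := by
  obtain ⟨c, C, hc, hcC, h⟩ := exists_mul_le_and_le_mul_of_isTheta_top
    (fun z : ℝ × ℝ => F_nonneg hp z.1 z.2) (fun z => by positivity) (isTheta_F hp)
  refine ⟨c, C, hc, hcC, fun a b => ?_⟩
  simpa only [Prod.norm_def, Real.norm_eq_abs, mul_assoc] using h (a, b)
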